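/- Let ρ₀ ≥ 1 and assume u ∈ H²(Ω). There exists a constant C > 0 depending only on Ω, a, b and c (independent of ρ₀) such that for every N and every mesh X ∈ S_N, the finite element error e_h = u − u_h satisfies ‖e_h‖_{L^∞(Ω)} ≤ C ‖r‖_Ω / N and ‖e_h'‖_{L^∞(Ω)} ≤ √(ρ₀ + 1) · C ‖r‖_Ω / √N, where r = f + a' u' − b u' − c u. -/

import Mathlib

/-!
Setting of Huang–He, "Error analysis for equidistributing meshes":
the boundary value problem  −(a u')' + b u' + c u = f on Ω = (0,1), u(0)=u(1)=0,
its linear finite element discretization on a mesh 0 = x₀ < ⋯ < x_N = 1,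
and the residual-based equidistribution quantities.
-/

noncomputable section
open MeasureTheory Real

namespace EquidMesh

/-- L² norm on (0,1). -/
def L2 (g : ℝ → ℝ) : ℝ := Real.sqrt (∫ t in (0:ℝ)..1, (g t)^2)

/-- L¹ norm on (0,1). -/
def L1 (g : ℝ → ℝ) : ℝ := ∫ t in (0:ℝ)..1, |g t|

/-- The L^{2/3} quasi-norm on (0,1): (∫₀¹ |g|^{2/3})^{3/2}. -/
def Lp23 (g : ℝ → ℝ) : ℝ := (∫ t in (0:ℝ)..1, |g t| ^ ((2:ℝ)/3)) ^ ((3:ℝ)/2)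

/-- L^∞ norm (essential supremum of |g|) on (0,1). -/
def Linf (g : ℝ → ℝ) : ℝ := essSup (fun t => |g t|) (volume.restrict (Set.Ioo (0:ℝ) 1))

/-- Membership in L²(0,1). -/
def MemL2 (g : ℝ → ℝ) : Prop :=
  Measurable g ∧ IntervalIntegrable (fun t => (g t)^2) volume 0 1

/-- Membership in L^∞(0,1). -/
def MemLinf (g : ℝ → ℝ) : Prop :=
  Measurable g ∧ ∃ M : ℝ, ∀ᵐ x ∂(volume.restrict (Set.Ioo (0:ℝ) 1)), |g x| ≤ M

/-- `g` is absolutely continuous on [0,1] with derivative `g' ∈ L¹(0,1)`. -/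
def HasL1Deriv (g g' : ℝ → ℝ) : Prop :=
  Measurable g' ∧ IntervalIntegrable g' volume 0 1 ∧
    ∀ x ∈ Set.Icc (0:ℝ) 1, g x = g 0 + ∫ t in (0:ℝ)..x, g' t

/-- A function in H¹(0,1): absolutely continuous on [0,1], carried together with its
(a.e.) derivative, which lies in L²(0,1). -/
structure H1 where
  val : ℝ → ℝ
  dval : ℝ → ℝ
  dval_meas : Measurable dval
  dval_int : IntervalIntegrable dval volume 0 1
  dval_sq_int : IntervalIntegrable (fun t => (dval t)^2) volume 0 1
  ftc : ∀ x ∈ Set.Icc (0:ℝ) 1, val x = val 0 + ∫ t in (0:ℝ)..x, dval t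

/-- `u ∈ H²(0,1)`: the derivative `u'` is absolutely continuous with `u'' ∈ L²(0,1)`. -/
def H1.IsH2 (u : H1) : Prop :=
  ∃ u'' : ℝ → ℝ, Measurable u'' ∧ IntervalIntegrable u'' volume 0 1 ∧
    IntervalIntegrable (fun t => (u'' t)^2) volume 0 1 ∧
    ∀ x ∈ Set.Icc (0:ℝ) 1, u.dval x = u.dval 0 + ∫ t in (0:ℝ)..x, u'' t

/-- The coefficients of the elliptic problem on Ω = (0,1):
`a, b ∈ W^{1,∞}(Ω)`, `c ∈ L^∞(Ω)`, `a ≥ a₀ > 0`, and `c − b'/2 ≥ 0` a.e. -/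
structure Coeffs where
  a : ℝ → ℝ
  b : ℝ → ℝ
  c : ℝ → ℝ
  a' : ℝ → ℝ
  b' : ℝ → ℝ
  a0 : ℝ
  a0_pos : 0 < a0
  a_lb : ∀ x ∈ Set.Icc (0:ℝ) 1, a0 ≤ a x
  a'_meas : Measurable a'
  b'_meas : Measurable b'
  c_meas : Measurable c
  a'_int : IntervalIntegrable a' volume 0 1
  b'_int : IntervalIntegrable b' volume 0 1
  a'_bdd : ∃ M : ℝ, ∀ᵐ x ∂(volume.restrict (Set.Ioo (0:ℝ) 1)), |a' x| ≤ M
  b'_bdd : ∃ M : ℝ, ∀ᵐ x ∂(volume.restrict (Set.Ioo (0:ℝ) 1)), |b' x| ≤ M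
  c_bdd : ∃ M : ℝ, ∀ᵐ x ∂(volume.restrict (Set.Ioo (0:ℝ) 1)), |c x| ≤ M
  ftc_a : ∀ x ∈ Set.Icc (0:ℝ) 1, a x = a 0 + ∫ t in (0:ℝ)..x, a' t
  ftc_b : ∀ x ∈ Set.Icc (0:ℝ) 1, b x = b 0 + ∫ t in (0:ℝ)..x, b' t
  cb_nonneg : ∀ᵐ x ∂(volume.restrict (Set.Ioo (0:ℝ) 1)), 0 ≤ c x - b' x / 2

/-- The bilinear form B(u,v) = ∫₀¹ (a u' v' + b u' v + c u v) dx. -/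
def Coeffs.B (P : Coeffs) (u v : H1) : ℝ :=
  ∫ t in (0:ℝ)..1,
    (P.a t * u.dval t * v.dval t + P.b t * u.dval t * v.val t + P.c t * u.val t * v.val t)

/-- The right-hand side functional (f, v) = ∫₀¹ f v dx. -/
def ip (f : ℝ → ℝ) (v : H1) : ℝ := ∫ t in (0:ℝ)..1, f t * v.val t

/-- `u ∈ H¹₀(Ω)` is the weak solution: B(u,v) = (f,v) for all v ∈ H¹₀(Ω). -/
def Coeffs.IsWeakSolution (P : Coeffs) (f : ℝ → ℝ) (u : H1) : Prop :=
  u.val 0 = 0 ∧ u.val 1 = 0 ∧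
    ∀ v : H1, v.val 0 = 0 → v.val 1 = 0 → P.B u v = ip f v

/-- A mesh of N elements of Ω = (0,1): 0 = x₀ < x₁ < ⋯ < x_N = 1. -/
structure Mesh (N : ℕ) where
  x : ℕ → ℝ
  x_zero : x 0 = 0
  x_last : x N = 1
  x_mono : ∀ i < N, x i < x (i+1)

/-- Element length (the element of index `i` is `(x i, x (i+1))`, `0 ≤ i < N`). -/
def Mesh.h {N : ℕ} (m : Mesh N) (i : ℕ) : ℝ := m.x (i+1) - m.x i

/-- `v` is piecewise linear with respect to the mesh: its derivative is constant
inside each element. -/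
def Mesh.IsPL {N : ℕ} (m : Mesh N) (v : H1) : Prop :=
  ∀ i < N, ∃ s : ℝ, ∀ t ∈ Set.Ioo (m.x i) (m.x (i+1)), v.dval t = s

/-- `uh` is the linear finite element solution on the mesh `m`:
a continuous piecewise linear function vanishing at 0 and 1 with
B(u_h, v_h) = (f, v_h) for all piecewise linear v_h vanishing at 0 and 1. -/
def Coeffs.IsFESolution (P : Coeffs) (f : ℝ → ℝ) {N : ℕ} (m : Mesh N) (uh : H1) : Prop :=
  uh.val 0 = 0 ∧ uh.val 1 = 0 ∧ m.IsPL uh ∧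
    ∀ v : H1, v.val 0 = 0 → v.val 1 = 0 → m.IsPL v → P.B uh v = ip f v

/-- The residual of `w`: r = f + a' w' − b w' − c w. -/
def Coeffs.res (P : Coeffs) (f : ℝ → ℝ) (w : H1) : ℝ → ℝ :=
  fun t => f t + P.a' t * w.dval t - P.b t * w.dval t - P.c t * w.val t

/-- The element L² average ⟨g⟩_i = (h_i⁻¹ ∫_{K_i} g²)^{1/2}. -/
def Mesh.avg {N : ℕ} (m : Mesh N) (g : ℝ → ℝ) (i : ℕ) : ℝ :=
  Real.sqrt ((1 / m.h i) * ∫ t in (m.x i)..(m.x (i+1)), (g t)^2)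

/-- The intensity parameter α_h = (Σ_i h_i ⟨g⟩_i^{2/3})³. -/
def Mesh.alpha {N : ℕ} (m : Mesh N) (g : ℝ → ℝ) : ℝ :=
  (∑ i ∈ Finset.range N, m.h i * (m.avg g i) ^ ((2:ℝ)/3)) ^ 3

/-- The adaptation function value ρ_i = (1 + α_h⁻¹ ⟨g⟩_i²)^{1/3}. -/
def Mesh.rho {N : ℕ} (m : Mesh N) (g : ℝ → ℝ) (i : ℕ) : ℝ :=
  (1 + (m.alpha g)⁻¹ * (m.avg g i)^2) ^ ((1:ℝ)/3)

/-- σ_h = Σ_i ρ_i h_i. -/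
def Mesh.sigma {N : ℕ} (m : Mesh N) (g : ℝ → ℝ) : ℝ :=
  ∑ i ∈ Finset.range N, m.rho g i * m.h i

/-- The mesh equidistributes (the piecewise constant adaptation function built from) `g`:
ρ_i h_i = σ_h / N for all elements. -/
def Mesh.IsEquidistributing {N : ℕ} (m : Mesh N) (g : ℝ → ℝ) : Prop :=
  ∀ i < N, m.rho g i * m.h i = m.sigma g / (N:ℝ)

/-- Membership in the mesh set S_N: 1/(ρ₀ N) ≤ h_i ≤ 2/N for all i. -/
def Mesh.InS {N : ℕ} (m : Mesh N) (ρ0 : ℝ) : Prop :=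
  ∀ i < N, 1 / (ρ0 * (N:ℝ)) ≤ m.h i ∧ m.h i ≤ 2 / (N:ℝ)

/-- The maximum norm distance ‖X − X̃‖_∞ between two meshes with the same N. -/
def meshDist {N : ℕ} (m m' : Mesh N) : ℝ :=
  (Finset.range (N+1)).sup' (Finset.nonempty_range_iff.mpr (Nat.succ_ne_zero N))
    (fun i => |m.x i - m'.x i|)

/-- The energy norm squared ‖v‖_E² = ∫₀¹ (a v'² + (c − b'/2) v²) dx. -/
def Coeffs.energySq (P : Coeffs) (v : H1) : ℝ :=
  ∫ t in (0:ℝ)..1, (P.a t * (v.dval t)^2 + (P.c t - P.b' t / 2) * (v.val t)^2)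


/-!
Testing the weak equation against smooth functions shows `-a u'' = r` almost everywhere, so that
`a₀ ‖u''‖ ≤ ‖r‖`. Coercivity and continuity of `B` make `u_h` quasi-optimal in the `H¹` seminorm,
and comparison with the nodal interpolant of `u`, whose slopes are the means of `u'` over the
elements, gives `‖e_h'‖ ≤ C H ‖r‖` when all elements have length at most `H`. The bound on `e_h`
follows because `e_h` vanishes at `0`. As for `e_h'`, on an element of length `h` it is somewhere at
most its quadratic mean, which is at most `‖e_h'‖ / √h`, and since `u_h'` is constant there, it
oscillates like `u'`, hence by at most `√h ‖u''‖`.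
-/

section

open Set

/-! ### Square integrable functions on an interval -/

section Interval

variable {f g : ℝ → ℝ} {p q : ℝ}

lemma memLp_two_Ioo_iff (hpq : p ≤ q) (hg : AEStronglyMeasurable g (volume.restrict (Ioo p q))) :
    MemLp g 2 (volume.restrict (Ioo p q)) ↔ IntervalIntegrable (fun t => g t ^ 2) volume p q := by
  rw [memLp_two_iff_integrable_sq hg, intervalIntegrable_iff_integrableOn_Ioo_of_le hpq,
    IntegrableOn]

lemma intervalIntegrable_sq_of_memLp_two (hpq : p ≤ q)
    (hg : MemLp g 2 (volume.restrict (Ioo p q))) :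
    IntervalIntegrable (fun t => g t ^ 2) volume p q :=
  (memLp_two_Ioo_iff hpq hg.1).1 hg

lemma intervalIntegrable_of_memLp_two (hpq : p ≤ q) (hf : MemLp f 2 (volume.restrict (Ioo p q))) :
    IntervalIntegrable f volume p q :=
  (intervalIntegrable_iff_integrableOn_Ioo_of_le hpq).2 (hf.integrable one_le_two)

lemma intervalIntegrable_mul_of_memLp_two (hpq : p ≤ q)
    (hf : MemLp f 2 (volume.restrict (Ioo p q))) (hg : MemLp g 2 (volume.restrict (Ioo p q))) :
    IntervalIntegrable (fun t => f t * g t) volume p q :=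
  (intervalIntegrable_iff_integrableOn_Ioo_of_le hpq).2 (hf.integrable_mul hg)

lemma intervalIntegrable_mono {p' q' : ℝ} (hg : IntervalIntegrable g volume p q)
    (hp : p' ∈ Icc p q) (hq : q' ∈ Icc p q) : IntervalIntegrable g volume p' q' := by
  refine hg.mono_set ?_
  rw [uIcc_of_le (hp.1.trans hp.2)]
  exact uIcc_subset_Icc hp hq

lemma integral_abs_mul_abs_le_sqrt_mul_sqrt {α : Type*} [MeasurableSpace α] {μ : Measure α}
    {f g : α → ℝ} (hf : MemLp f 2 μ) (hg : MemLp g 2 μ) :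
    ∫ t, |f t| * |g t| ∂μ ≤ √(∫ t, f t ^ 2 ∂μ) * √(∫ t, g t ^ 2 ∂μ) := by
  have h := integral_mul_le_Lp_mul_Lq_of_nonneg (μ := μ) Real.HolderConjugate.two_two
    (ae_of_all _ fun t => abs_nonneg (f t)) (ae_of_all _ fun t => abs_nonneg (g t))
    (by simpa using hf.norm) (by simpa using hg.norm)
  simpa [Real.sqrt_eq_rpow] using h

lemma intervalIntegral_abs_le_sqrt_mul_sqrt (hpq : p ≤ q)
    (hf : MemLp f 2 (volume.restrict (Ioo p q))) :
    ∫ t in p..q, |f t| ≤ √(q - p) * √(∫ t in p..q, f t ^ 2) := by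
  have h := integral_abs_mul_abs_le_sqrt_mul_sqrt hf (memLp_const (1 : ℝ))
  simpa [intervalIntegral.integral_of_le hpq, integral_Ioc_eq_integral_Ioo, mul_comm, hpq] using h

lemma abs_intervalAverage_sub_le (hpq : p < q) (hg : IntervalIntegrable g volume p q) {c M : ℝ}
    (h : ∀ s ∈ Ioc p q, |g s - c| ≤ M) : |(⨍ s in p..q, g s) - c| ≤ M := by
  rw [uIoc_of_le hpq.le, ← Real.dist_eq, ← Metric.mem_closedBall]
  refine (convex_closedBall c M).set_average_mem Metric.isClosed_closedBall (by simp [hpq])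
    (by simp) ?_ ((intervalIntegrable_iff_integrableOn_Ioc_of_le hpq.le).1 hg)
  filter_upwards [ae_restrict_mem measurableSet_Ioc] with s hs
  exact h s hs

lemma exists_mem_Ioo_abs_le_sqrt_integral_sq_div (hpq : p < q)
    (hg : IntervalIntegrable (fun t => g t ^ 2) volume p q) :
    ∃ y ∈ Ioo p q, |g y| ≤ √(∫ t in p..q, g t ^ 2) / √(q - p) := by
  obtain ⟨y, hy, hle⟩ := exists_le_setAverage (s := Ioo p q) (by simp [hpq]) (by simp)
    ((intervalIntegrable_iff_integrableOn_Ioo_of_le hpq.le).1 hg)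
  rw [setAverage_eq, Real.volume_real_Ioo_of_le hpq.le, ← integral_Ioc_eq_integral_Ioo,
    ← intervalIntegral.integral_of_le hpq.le, smul_eq_mul, ← div_eq_inv_mul] at hle
  refine ⟨y, hy, ?_⟩
  rw [← Real.sqrt_div' _ (sub_nonneg.2 hpq.le)]
  exact Real.abs_le_sqrt hle

end Interval

/-! ### Primitives of integrable functions -/

/-- `g` is absolutely continuous on `[p, q]` with a.e. derivative `g'`, expressed through the
fundamental theorem of calculus. Unlike in `HasL1Deriv`, `g'` need not be measurable on the whole
line, so that the notion is stable under products. -/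
structure IsPrimitiveOn (g g' : ℝ → ℝ) (p q : ℝ) : Prop where
  intervalIntegrable_deriv : IntervalIntegrable g' volume p q
  integral_eq_sub : ∀ s ∈ Icc p q, ∀ t ∈ Icc p q, ∫ τ in s..t, g' τ = g t - g s

namespace IsPrimitiveOn

variable {g g' k k' : ℝ → ℝ} {p q : ℝ}

lemma of_forall_eq_add_integral (hg' : IntervalIntegrable g' volume p q)
    (h : ∀ x ∈ Icc p q, g x = g p + ∫ t in p..x, g' t) : IsPrimitiveOn g g' p q where
  intervalIntegrable_deriv := hg'
  integral_eq_sub s hs t ht := by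
    have hp : p ∈ Icc p q := left_mem_Icc.2 (hs.1.trans hs.2)
    rw [h s hs, h t ht, add_sub_add_left_eq_sub, intervalIntegral.integral_interval_sub_left
      (intervalIntegrable_mono hg' hp ht) (intervalIntegrable_mono hg' hp hs)]

lemma mono {p' q' : ℝ} (h : IsPrimitiveOn g g' p q) (hp : p ≤ p') (hpq : p' ≤ q') (hq : q' ≤ q) :
    IsPrimitiveOn g g' p' q' where
  intervalIntegrable_deriv :=
    intervalIntegrable_mono h.intervalIntegrable_deriv ⟨hp, hpq.trans hq⟩ ⟨hp.trans hpq, hq⟩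
  integral_eq_sub s hs t ht :=
    h.integral_eq_sub s (Icc_subset_Icc hp hq hs) t (Icc_subset_Icc hp hq ht)

lemma exists_absolutelyContinuousOnInterval (h : IsPrimitiveOn g g' p q) (hpq : p ≤ q) :
    ∃ G : ℝ → ℝ, AbsolutelyContinuousOnInterval G p q ∧ EqOn g G (Icc p q) ∧
      ∀ᵐ x, x ∈ Icc p q → HasDerivAt G (g' x) x := by
  refine ⟨fun x => g p + ∫ t in p..x, g' t, ?_, fun x hx => ?_, ?_⟩
  · exact (LipschitzWith.const (g p)).lipschitzOnWith.absolutelyContinuousOnInterval.add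
      (h.intervalIntegrable_deriv.absolutelyContinuousOnInterval_intervalIntegral left_mem_uIcc)
  · simp only [h.integral_eq_sub p (left_mem_Icc.2 hpq) x hx, add_sub_cancel]
  · filter_upwards [h.intervalIntegrable_deriv.ae_hasDerivAt_integral] with x hx hxI
    exact (hx (Icc_subset_uIcc hxI) p left_mem_uIcc).const_add _

lemma continuousOn (h : IsPrimitiveOn g g' p q) : ContinuousOn g (Icc p q) := by
  rcases le_or_gt p q with hpq | hqp
  · obtain ⟨G, hG, hgG, -⟩ := h.exists_absolutelyContinuousOnInterval hpq
    exact (uIcc_of_le hpq ▸ hG.continuousOn).congr hgG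
  · simp [Icc_eq_empty_of_lt hqp]

lemma mul (hg : IsPrimitiveOn g g' p q) (hk : IsPrimitiveOn k k' p q) (hpq : p ≤ q) :
    IsPrimitiveOn (fun x => g x * k x) (fun x => g' x * k x + g x * k' x) p q where
  intervalIntegrable_deriv :=
    (hg.intervalIntegrable_deriv.mul_continuousOn (uIcc_of_le hpq ▸ hk.continuousOn)).add
      (hk.intervalIntegrable_deriv.continuousOn_mul (uIcc_of_le hpq ▸ hg.continuousOn))
  integral_eq_sub s hs t ht := by
    obtain ⟨G, hG, hgG, hG'⟩ := hg.exists_absolutelyContinuousOnInterval hpq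
    obtain ⟨K, hK, hkK, hK'⟩ := hk.exists_absolutelyContinuousOnInterval hpq
    have hst : uIcc s t ⊆ Icc p q := uIcc_subset_Icc hs ht
    have hst' : uIcc s t ⊆ uIcc p q := hst.trans Icc_subset_uIcc
    rw [hgG hs, hgG ht, hkK hs, hkK ht,
      ← (hG.mono hst').integral_deriv_mul_eq_sub (hK.mono hst')]
    refine intervalIntegral.integral_congr_ae ?_
    filter_upwards [hG', hK'] with x hGx hKx hx
    have hx := hst (uIoc_subset_uIcc hx)
    rw [(hGx hx).deriv, (hKx hx).deriv, hgG hx, hkK hx]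

lemma memLp_top (h : IsPrimitiveOn g g' p q) : MemLp g ⊤ (volume.restrict (Ioo p q)) := by
  obtain ⟨M, hM⟩ := isCompact_Icc.exists_bound_of_continuousOn h.continuousOn
  refine memLp_top_of_bound
    ((h.continuousOn.mono Ioo_subset_Icc_self).aestronglyMeasurable measurableSet_Ioo) M ?_
  filter_upwards [ae_restrict_mem measurableSet_Ioo] with x hx
  exact hM x (Ioo_subset_Icc_self hx)

lemma abs_sub_le (h : IsPrimitiveOn g g' p q) (hg' : MemLp g' 2 (volume.restrict (Ioo p q)))
    {s t : ℝ} (hs : s ∈ Icc p q) (ht : t ∈ Icc p q) :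
    |g t - g s| ≤ √(q - p) * √(∫ τ in p..q, g' τ ^ 2) := by
  wlog hst : s ≤ t generalizing s t
  · rw [abs_sub_comm]
    exact this ht hs (le_of_not_ge hst)
  calc |g t - g s| = |∫ τ in s..t, g' τ| := by rw [h.integral_eq_sub s hs t ht]
    _ ≤ ∫ τ in s..t, |g' τ| := intervalIntegral.abs_integral_le_integral_abs hst
    _ ≤ ∫ τ in p..q, |g' τ| :=
        intervalIntegral.integral_mono_interval hs.1 hst ht.2 (ae_of_all _ fun _ => abs_nonneg _)
          h.intervalIntegrable_deriv.abs
    _ ≤ √(q - p) * √(∫ τ in p..q, g' τ ^ 2) :=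
        intervalIntegral_abs_le_sqrt_mul_sqrt (hs.1.trans hs.2) hg'

lemma integral_sq_sub_intervalAverage_le (h : IsPrimitiveOn g g' p q)
    (hg' : MemLp g' 2 (volume.restrict (Ioo p q))) (hpq : p < q) :
    ∫ t in p..q, (g t - ⨍ s in p..q, g s) ^ 2 ≤ (q - p) ^ 2 * ∫ t in p..q, g' t ^ 2 := by
  have hg : ContinuousOn g (uIcc p q) := uIcc_of_le hpq.le ▸ h.continuousOn
  have hsq : 0 ≤ ∫ t in p..q, g' t ^ 2 :=
    intervalIntegral.integral_nonneg hpq.le fun _ _ => sq_nonneg _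
  have hdev : ∀ t ∈ Icc p q,
      (g t - ⨍ s in p..q, g s) ^ 2 ≤ (q - p) * ∫ τ in p..q, g' τ ^ 2 := by
    intro t ht
    rw [← Real.sqrt_le_sqrt_iff (mul_nonneg (sub_nonneg.2 hpq.le) hsq), Real.sqrt_sq_eq_abs,
      Real.sqrt_mul (sub_nonneg.2 hpq.le), abs_sub_comm]
    exact abs_intervalAverage_sub_le hpq hg.intervalIntegrable fun s hs =>
      h.abs_sub_le hg' ht (Ioc_subset_Icc_self hs)
  calc ∫ t in p..q, (g t - ⨍ s in p..q, g s) ^ 2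
      ≤ ∫ _ in p..q, (q - p) * ∫ τ in p..q, g' τ ^ 2 :=
        intervalIntegral.integral_mono_on hpq.le
          ((hg.sub continuousOn_const).pow 2).intervalIntegrable intervalIntegrable_const hdev
    _ = (q - p) ^ 2 * ∫ t in p..q, g' t ^ 2 := by
        rw [intervalIntegral.integral_const, smul_eq_mul]
        ring

end IsPrimitiveOn

/-! ### Norms on the unit interval -/

lemma L2_nonneg (g : ℝ → ℝ) : 0 ≤ L2 g := Real.sqrt_nonneg _

lemma L2_sq (g : ℝ → ℝ) : L2 g ^ 2 = ∫ t in (0 : ℝ)..1, g t ^ 2 :=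
  Real.sq_sqrt (intervalIntegral.integral_nonneg zero_le_one fun _ _ => sq_nonneg _)

lemma L2_const_mul (c : ℝ) (g : ℝ → ℝ) : L2 (fun t => c * g t) = |c| * L2 g := by
  simp only [L2, mul_pow, intervalIntegral.integral_const_mul, Real.sqrt_mul (sq_nonneg c),
    Real.sqrt_sq_eq_abs]

lemma L2_mono_ae {f g : ℝ → ℝ} (hg : MemLp g 2 (volume.restrict (Ioo 0 1)))
    (h : ∀ᵐ t ∂(volume.restrict (Ioo (0 : ℝ) 1)), |f t| ≤ |g t|) : L2 f ≤ L2 g := by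
  simp only [L2, intervalIntegral.integral_of_le zero_le_one, integral_Ioc_eq_integral_Ioo]
  refine Real.sqrt_le_sqrt
    (integral_mono_of_nonneg (ae_of_all _ fun _ => sq_nonneg _) hg.integrable_sq ?_)
  filter_upwards [h] with t ht
  exact sq_le_sq.2 ht

lemma sqrt_integral_sq_le_L2 {g : ℝ → ℝ} (hg : MemLp g 2 (volume.restrict (Ioo 0 1))) {p q : ℝ}
    (hp : 0 ≤ p) (hpq : p ≤ q) (hq : q ≤ 1) : √(∫ t in p..q, g t ^ 2) ≤ L2 g :=
  Real.sqrt_le_sqrt (intervalIntegral.integral_mono_interval hp hpq hq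
    (ae_of_all _ fun _ => sq_nonneg _) (intervalIntegrable_sq_of_memLp_two zero_le_one hg))

lemma ae_restrict_Ioo_neBot : (ae (volume.restrict (Ioo (0 : ℝ) 1))).NeBot := by
  rw [ae_neBot, Ne, Measure.restrict_eq_zero]
  simp

lemma Linf_le_of_ae_abs_le {g : ℝ → ℝ} {M : ℝ}
    (h : ∀ᵐ t ∂(volume.restrict (Ioo (0 : ℝ) 1)), |g t| ≤ M) : Linf g ≤ M := by
  have := ae_restrict_Ioo_neBot
  exact Filter.limsup_le_of_le
    (Filter.isCoboundedUnder_le_of_le _ (x := 0) fun _ => abs_nonneg _) h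

lemma ae_abs_le_Linf {g : ℝ → ℝ} (hg : MemLp g ⊤ (volume.restrict (Ioo 0 1))) :
    ∀ᵐ t ∂(volume.restrict (Ioo (0 : ℝ) 1)), |g t| ≤ Linf g :=
  ae_le_essSup (Filter.isBoundedUnder_of_eventually_le (ae_le_lpNorm_exponent_top hg))

lemma Linf_nonneg {g : ℝ → ℝ} (hg : MemLp g ⊤ (volume.restrict (Ioo 0 1))) : 0 ≤ Linf g := by
  have := ae_restrict_Ioo_neBot
  obtain ⟨t, ht⟩ := (ae_abs_le_Linf hg).exists
  exact (abs_nonneg _).trans ht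

lemma integral_mul_mul_le_Linf_mul_L2_mul_L2 {k f g : ℝ → ℝ}
    (hk : MemLp k ⊤ (volume.restrict (Ioo 0 1))) (hf : MemLp f 2 (volume.restrict (Ioo 0 1)))
    (hg : MemLp g 2 (volume.restrict (Ioo 0 1))) :
    ∫ t in (0 : ℝ)..1, k t * f t * g t ≤ Linf k * L2 f * L2 g := by
  have hkf : MemLp (fun t => k t * f t) 2 (volume.restrict (Ioo 0 1)) := hf.mul hk
  simp only [L2, intervalIntegral.integral_of_le zero_le_one, integral_Ioc_eq_integral_Ioo,
    mul_assoc]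
  calc ∫ t in Ioo 0 1, k t * (f t * g t) ≤ ∫ t in Ioo 0 1, Linf k * (|f t| * |g t|) := by
        refine integral_mono_ae
          ((hkf.integrable_mul hg).congr (ae_of_all _ fun t => mul_assoc _ _ _))
          ((hf.norm.integrable_mul hg.norm).const_mul _) ?_
        filter_upwards [ae_abs_le_Linf hk] with t ht
        rw [← abs_mul]
        exact (le_abs_self _).trans ((abs_mul _ _).trans_le (by gcongr))
    _ = Linf k * ∫ t in Ioo 0 1, |f t| * |g t| := integral_const_mul _ _
    _ ≤ _ := mul_le_mul_of_nonneg_left (integral_abs_mul_abs_le_sqrt_mul_sqrt hf hg)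
        (Linf_nonneg hk)

/-! ### Sobolev functions -/

namespace H1

lemma isPrimitiveOn (v : H1) : IsPrimitiveOn v.val v.dval 0 1 :=
  .of_forall_eq_add_integral v.dval_int v.ftc

lemma memLp_dval (v : H1) : MemLp v.dval 2 (volume.restrict (Ioo 0 1)) :=
  (memLp_two_Ioo_iff zero_le_one v.dval_meas.aestronglyMeasurable).2 v.dval_sq_int

lemma memLp_val (v : H1) : MemLp v.val 2 (volume.restrict (Ioo 0 1)) :=
  v.isPrimitiveOn.memLp_top.mono_exponent le_top

lemma IsH2.exists_isPrimitiveOn {u : H1} (hu : u.IsH2) :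
    ∃ u'' : ℝ → ℝ, IsPrimitiveOn u.dval u'' 0 1 ∧ MemLp u'' 2 (volume.restrict (Ioo 0 1)) := by
  obtain ⟨u'', hmeas, hint, hsq, hftc⟩ := hu
  exact ⟨u'', .of_forall_eq_add_integral hint hftc,
    (memLp_two_Ioo_iff zero_le_one hmeas.aestronglyMeasurable).2 hsq⟩

lemma abs_val_le_L2_dval (v : H1) (h0 : v.val 0 = 0) {x : ℝ} (hx : x ∈ Icc (0 : ℝ) 1) :
    |v.val x| ≤ L2 v.dval := by
  simpa [h0, L2] using v.isPrimitiveOn.abs_sub_le v.memLp_dval (left_mem_Icc.2 zero_le_one) hx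

lemma L2_val_le_L2_dval (v : H1) (h0 : v.val 0 = 0) : L2 v.val ≤ L2 v.dval := by
  have h : L2 v.val ≤ L2 fun _ => L2 v.dval := by
    refine L2_mono_ae (memLp_const _) ?_
    filter_upwards [ae_restrict_mem measurableSet_Ioo] with t ht
    exact (v.abs_val_le_L2_dval h0 (Ioo_subset_Icc_self ht)).trans (le_abs_self _)
  simpa [L2, Real.sqrt_sq] using h

lemma Linf_val_le_L2_dval (v : H1) (h0 : v.val 0 = 0) : Linf v.val ≤ L2 v.dval := by
  refine Linf_le_of_ae_abs_le ?_
  filter_upwards [ae_restrict_mem measurableSet_Ioo] with t ht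
  exact v.abs_val_le_L2_dval h0 (Ioo_subset_Icc_self ht)

instance : Sub H1 where
  sub u v :=
    { val := fun t => u.val t - v.val t
      dval := fun t => u.dval t - v.dval t
      dval_meas := u.dval_meas.sub v.dval_meas
      dval_int := u.dval_int.sub v.dval_int
      dval_sq_int := intervalIntegrable_sq_of_memLp_two zero_le_one
        (u.memLp_dval.sub v.memLp_dval)
      ftc := fun x hx => by
        have h0 : (0 : ℝ) ∈ Icc (0 : ℝ) 1 := left_mem_Icc.2 zero_le_one
        rw [intervalIntegral.integral_sub (intervalIntegrable_mono u.dval_int h0 hx)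
          (intervalIntegrable_mono v.dval_int h0 hx), u.ftc x hx, v.ftc x hx]
        ring }

lemma sub_val (u v : H1) (t : ℝ) : (u - v).val t = u.val t - v.val t := rfl

lemma sub_dval (u v : H1) (t : ℝ) : (u - v).dval t = u.dval t - v.dval t := rfl

/-- A continuously differentiable function as an element of `H¹(0,1)`. -/
def ofContDiff (v : ℝ → ℝ) (hv : ContDiff ℝ 1 v) : H1 where
  val := v
  dval := deriv v
  dval_meas := measurable_deriv v
  dval_int := (hv.continuous_deriv le_rfl).intervalIntegrable _ _
  dval_sq_int := ((hv.continuous_deriv le_rfl).pow 2).intervalIntegrable _ _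
  ftc x _ := by
    rw [intervalIntegral.integral_deriv_eq_sub
      (fun t _ => (hv.differentiable one_ne_zero).differentiableAt)
      ((hv.continuous_deriv le_rfl).intervalIntegrable _ _), add_sub_cancel]

end H1

/-! ### The bilinear form -/

namespace Coeffs

variable (P : Coeffs)

lemma isPrimitiveOn_a : IsPrimitiveOn P.a P.a' 0 1 := .of_forall_eq_add_integral P.a'_int P.ftc_a

lemma isPrimitiveOn_b : IsPrimitiveOn P.b P.b' 0 1 := .of_forall_eq_add_integral P.b'_int P.ftc_b

lemma memLp_top_a' : MemLp P.a' ⊤ (volume.restrict (Ioo 0 1)) :=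
  P.a'_bdd.elim fun M hM => memLp_top_of_bound P.a'_meas.aestronglyMeasurable M hM

lemma memLp_top_b' : MemLp P.b' ⊤ (volume.restrict (Ioo 0 1)) :=
  P.b'_bdd.elim fun M hM => memLp_top_of_bound P.b'_meas.aestronglyMeasurable M hM

lemma memLp_top_c : MemLp P.c ⊤ (volume.restrict (Ioo 0 1)) :=
  P.c_bdd.elim fun M hM => memLp_top_of_bound P.c_meas.aestronglyMeasurable M hM

lemma intervalIntegrable_a_mul (u v : H1) :
    IntervalIntegrable (fun t => P.a t * u.dval t * v.dval t) volume 0 1 :=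
  intervalIntegrable_mul_of_memLp_two zero_le_one (u.memLp_dval.mul P.isPrimitiveOn_a.memLp_top)
    v.memLp_dval

lemma intervalIntegrable_b_mul (u v : H1) :
    IntervalIntegrable (fun t => P.b t * u.dval t * v.val t) volume 0 1 :=
  intervalIntegrable_mul_of_memLp_two zero_le_one (u.memLp_dval.mul P.isPrimitiveOn_b.memLp_top)
    v.memLp_val

lemma intervalIntegrable_c_mul (u v : H1) :
    IntervalIntegrable (fun t => P.c t * u.val t * v.val t) volume 0 1 :=
  intervalIntegrable_mul_of_memLp_two zero_le_one (u.memLp_val.mul P.memLp_top_c) v.memLp_val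

lemma intervalIntegrable_B (u v : H1) : IntervalIntegrable (fun t =>
    P.a t * u.dval t * v.dval t + P.b t * u.dval t * v.val t + P.c t * u.val t * v.val t)
    volume 0 1 :=
  ((P.intervalIntegrable_a_mul u v).add (P.intervalIntegrable_b_mul u v)).add
    (P.intervalIntegrable_c_mul u v)

lemma B_sub_left (u v w : H1) : P.B (u - v) w = P.B u w - P.B v w := by
  rw [B, B, B, ← intervalIntegral.integral_sub (P.intervalIntegrable_B u w)
    (P.intervalIntegrable_B v w)]
  refine intervalIntegral.integral_congr fun t _ => ?_
  simp only [H1.sub_val, H1.sub_dval]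
  ring

lemma B_sub_right (u v w : H1) : P.B u (v - w) = P.B u v - P.B u w := by
  rw [B, B, B, ← intervalIntegral.integral_sub (P.intervalIntegrable_B u v)
    (P.intervalIntegrable_B u w)]
  refine intervalIntegral.integral_congr fun t _ => ?_
  simp only [H1.sub_val, H1.sub_dval]
  ring

lemma B_self_eq_energySq (v : H1) (h0 : v.val 0 = 0) (h1 : v.val 1 = 0) :
    P.B v v = P.energySq v := by
  have hbvv : IsPrimitiveOn (fun t => P.b t * (v.val t * v.val t)) _ 0 1 :=
    P.isPrimitiveOn_b.mul (v.isPrimitiveOn.mul v.isPrimitiveOn zero_le_one) zero_le_one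
  have hzero := hbvv.integral_eq_sub 0 (left_mem_Icc.2 zero_le_one) 1 (right_mem_Icc.2 zero_le_one)
  simp only [h0, h1, mul_zero, sub_zero] at hzero
  calc P.B v v
      = P.B v v - 1 / 2 * ∫ t in (0 : ℝ)..1, (P.b' t * (v.val t * v.val t)
          + P.b t * (v.dval t * v.val t + v.val t * v.dval t)) := by rw [hzero]; ring
    _ = P.energySq v := by
        rw [B, energySq, ← intervalIntegral.integral_const_mul, ← intervalIntegral.integral_sub
          (P.intervalIntegrable_B v v) (hbvv.intervalIntegrable_deriv.const_mul _)]
        exact intervalIntegral.integral_congr fun t _ => by ring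

lemma a0_mul_L2_dval_sq_le_energySq (v : H1) : P.a0 * L2 v.dval ^ 2 ≤ P.energySq v := by
  have hcb : MemLp (fun t => P.c t - P.b' t / 2) ⊤ (volume.restrict (Ioo 0 1)) := by
    simp only [div_eq_inv_mul]
    exact P.memLp_top_c.sub (P.memLp_top_b'.const_mul 2⁻¹)
  have hcbv : MemLp (fun t => (P.c t - P.b' t / 2) * v.val t) 2 (volume.restrict (Ioo 0 1)) :=
    v.memLp_val.mul hcb
  have henergy : IntervalIntegrable (fun t =>
      P.a t * v.dval t ^ 2 + (P.c t - P.b' t / 2) * v.val t ^ 2) volume 0 1 := by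
    simpa only [mul_assoc, ← sq] using (P.intervalIntegrable_a_mul v v).add
      (intervalIntegrable_mul_of_memLp_two zero_le_one hcbv v.memLp_val)
  rw [L2_sq, ← intervalIntegral.integral_const_mul, energySq]
  refine intervalIntegral.integral_mono_ae_restrict zero_le_one (v.dval_sq_int.const_mul _)
    henergy ?_
  rw [← restrict_Ioo_eq_restrict_Icc]
  filter_upwards [ae_restrict_mem measurableSet_Ioo, P.cb_nonneg] with t ht hcbt
  have ha : P.a0 * v.dval t ^ 2 ≤ P.a t * v.dval t ^ 2 :=
    mul_le_mul_of_nonneg_right (P.a_lb t (Ioo_subset_Icc_self ht)) (sq_nonneg _)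
  have hc : 0 ≤ (P.c t - P.b' t / 2) * v.val t ^ 2 := mul_nonneg hcbt (sq_nonneg _)
  linarith

lemma a0_mul_L2_dval_sq_le_B (v : H1) (h0 : v.val 0 = 0) (h1 : v.val 1 = 0) :
    P.a0 * L2 v.dval ^ 2 ≤ P.B v v :=
  (P.a0_mul_L2_dval_sq_le_energySq v).trans_eq (P.B_self_eq_energySq v h0 h1).symm

/-- The continuity constant `‖a‖_{L^∞} + ‖b‖_{L^∞} + ‖c‖_{L^∞}` of the bilinear form with respect
to the `H¹` seminorm. -/
def contConst : ℝ := Linf P.a + Linf P.b + Linf P.c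

lemma contConst_nonneg : 0 ≤ P.contConst :=
  add_nonneg (add_nonneg (Linf_nonneg P.isPrimitiveOn_a.memLp_top)
    (Linf_nonneg P.isPrimitiveOn_b.memLp_top)) (Linf_nonneg P.memLp_top_c)

lemma B_le_contConst_mul {v w : H1} (hv : v.val 0 = 0) (hw : w.val 0 = 0) :
    P.B v w ≤ P.contConst * L2 v.dval * L2 w.dval := by
  have ha := P.isPrimitiveOn_a.memLp_top
  have hb := P.isPrimitiveOn_b.memLp_top
  have hb0 := Linf_nonneg hb
  have hc0 := Linf_nonneg P.memLp_top_c
  have hv0 := L2_nonneg v.dval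
  have hw0 := L2_nonneg w.val
  calc P.B v w
      = (∫ t in (0 : ℝ)..1, P.a t * v.dval t * w.dval t)
        + (∫ t in (0 : ℝ)..1, P.b t * v.dval t * w.val t)
        + ∫ t in (0 : ℝ)..1, P.c t * v.val t * w.val t := by
        rw [B, intervalIntegral.integral_add ((P.intervalIntegrable_a_mul v w).add
          (P.intervalIntegrable_b_mul v w)) (P.intervalIntegrable_c_mul v w),
          intervalIntegral.integral_add (P.intervalIntegrable_a_mul v w)
          (P.intervalIntegrable_b_mul v w)]
    _ ≤ Linf P.a * L2 v.dval * L2 w.dval + Linf P.b * L2 v.dval * L2 w.val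
        + Linf P.c * L2 v.val * L2 w.val :=
        add_le_add_three
          (integral_mul_mul_le_Linf_mul_L2_mul_L2 ha v.memLp_dval w.memLp_dval)
          (integral_mul_mul_le_Linf_mul_L2_mul_L2 hb v.memLp_dval w.memLp_val)
          (integral_mul_mul_le_Linf_mul_L2_mul_L2 P.memLp_top_c v.memLp_val w.memLp_val)
    _ ≤ Linf P.a * L2 v.dval * L2 w.dval + Linf P.b * L2 v.dval * L2 w.dval
        + Linf P.c * L2 v.dval * L2 w.dval := by
        gcongr
        exacts [w.L2_val_le_L2_dval hw, v.L2_val_le_L2_dval hv, w.L2_val_le_L2_dval hw]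
    _ = P.contConst * L2 v.dval * L2 w.dval := by rw [contConst]; ring

end Coeffs

/-! ### Regularity of the weak solution -/

section Regularity

variable {P : Coeffs} {f u'' : ℝ → ℝ} {u : H1}

lemma MemL2.memLp (hf : MemL2 f) : MemLp f 2 (volume.restrict (Ioo 0 1)) :=
  (memLp_two_Ioo_iff zero_le_one hf.1.aestronglyMeasurable).2 hf.2

lemma Coeffs.memLp_res (P : Coeffs) (u : H1) (hf : MemL2 f) :
    MemLp (P.res f u) 2 (volume.restrict (Ioo 0 1)) :=
  ((hf.memLp.add (u.memLp_dval.mul P.memLp_top_a')).sub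
    (u.memLp_dval.mul P.isPrimitiveOn_b.memLp_top)).sub (u.memLp_val.mul P.memLp_top_c)

lemma Coeffs.IsWeakSolution.integral_mul_eq_zero (hu : P.IsWeakSolution f u) (hf : MemL2 f)
    (hu'' : IsPrimitiveOn u.dval u'' 0 1) (v : H1) (h0 : v.val 0 = 0) (h1 : v.val 1 = 0) :
    ∫ t in (0 : ℝ)..1, (P.a t * u'' t + P.res f u t) * v.val t = 0 := by
  have hflux := (P.isPrimitiveOn_a.mul hu'' zero_le_one).mul v.isPrimitiveOn zero_le_one
  have hboundary :=
    hflux.integral_eq_sub 0 (left_mem_Icc.2 zero_le_one) 1 (right_mem_Icc.2 zero_le_one)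
  simp only [h0, h1, mul_zero, sub_zero] at hboundary
  have hfv := intervalIntegrable_mul_of_memLp_two zero_le_one hf.memLp v.memLp_val
  have hweak : P.B u v - ip f v = 0 := sub_eq_zero.2 (hu.2.2 v h0 h1)
  rw [Coeffs.B, ip, ← intervalIntegral.integral_sub (P.intervalIntegrable_B u v) hfv] at hweak
  calc ∫ t in (0 : ℝ)..1, (P.a t * u'' t + P.res f u t) * v.val t
      = ∫ t in (0 : ℝ)..1, ((P.a' t * u.dval t + P.a t * u'' t) * v.val t
            + P.a t * u.dval t * v.dval t
          - (P.a t * u.dval t * v.dval t + P.b t * u.dval t * v.val t + P.c t * u.val t * v.val t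
            - f t * v.val t)) :=
        intervalIntegral.integral_congr fun t _ => by simp only [Coeffs.res]; ring
    _ = 0 := by
        rw [intervalIntegral.integral_sub hflux.intervalIntegrable_deriv
          ((P.intervalIntegrable_B u v).sub hfv), hboundary, hweak, sub_zero]

lemma ae_eq_zero_of_forall_integral_mul_eq_zero {g : ℝ → ℝ}
    (hg : IntervalIntegrable g volume 0 1)
    (h : ∀ v : H1, v.val 0 = 0 → v.val 1 = 0 → ∫ t in (0 : ℝ)..1, g t * v.val t = 0) :
    ∀ᵐ t ∂(volume.restrict (Ioo (0 : ℝ) 1)), g t = 0 := by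
  rw [ae_restrict_iff' measurableSet_Ioo]
  refine isOpen_Ioo.ae_eq_zero_of_integral_contDiff_smul_eq_zero
    ((intervalIntegrable_iff_integrableOn_Ioo_of_le zero_le_one).1 hg).locallyIntegrableOn
    fun v hv _ hsupp => ?_
  have hzero : ∀ t, t ∉ Ioo (0 : ℝ) 1 → v t = 0 := fun t ht =>
    image_eq_zero_of_notMem_tsupport fun hmem => ht (hsupp hmem)
  have hweak := h (.ofContDiff v (hv.of_le (by exact_mod_cast le_top)))
    (hzero 0 (by simp)) (hzero 1 (by simp))
  rw [intervalIntegral.integral_of_le zero_le_one, integral_Ioc_eq_integral_Ioo] at hweak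
  rw [← setIntegral_eq_integral_of_forall_compl_eq_zero (s := Ioo 0 1)
    fun t ht => by rw [hzero t ht, zero_smul]]
  simpa only [smul_eq_mul, mul_comm, H1.ofContDiff] using hweak

lemma Coeffs.IsWeakSolution.ae_a_mul_add_res_eq_zero (hu : P.IsWeakSolution f u) (hf : MemL2 f)
    (hu'' : IsPrimitiveOn u.dval u'' 0 1) :
    ∀ᵐ t ∂(volume.restrict (Ioo (0 : ℝ) 1)), P.a t * u'' t + P.res f u t = 0 :=
  ae_eq_zero_of_forall_integral_mul_eq_zero
    ((hu''.intervalIntegrable_deriv.continuousOn_mul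
      (uIcc_of_le (zero_le_one' ℝ) ▸ P.isPrimitiveOn_a.continuousOn)).add
      (intervalIntegrable_of_memLp_two zero_le_one (P.memLp_res u hf)))
    (hu.integral_mul_eq_zero hf hu'')

lemma Coeffs.IsWeakSolution.a0_mul_L2_le_L2_res (hu : P.IsWeakSolution f u) (hf : MemL2 f)
    (hu'' : IsPrimitiveOn u.dval u'' 0 1) : P.a0 * L2 u'' ≤ L2 (P.res f u) := by
  rw [← abs_of_pos P.a0_pos, ← L2_const_mul]
  refine L2_mono_ae (P.memLp_res u hf) ?_
  filter_upwards [ae_restrict_mem measurableSet_Ioo, hu.ae_a_mul_add_res_eq_zero hf hu'']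
    with t ht hstrong
  have ha := P.a_lb t (Ioo_subset_Icc_self ht)
  rw [eq_neg_of_add_eq_zero_right hstrong, abs_neg, abs_mul, abs_mul, abs_of_pos P.a0_pos,
    abs_of_pos (P.a0_pos.trans_le ha)]
  gcongr

end Regularity

/-! ### Meshes and interpolation -/

namespace Mesh

variable {N : ℕ} (m : Mesh N)

lemma pos (m : Mesh N) : 0 < N := by
  refine Nat.pos_of_ne_zero fun hN => ?_
  subst hN
  exact zero_ne_one (m.x_zero.symm.trans m.x_last)

lemma h_pos {i : ℕ} (hi : i < N) : 0 < m.h i := sub_pos.2 (m.x_mono i hi)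

lemma nonneg_of_forall_h_le {H : ℝ} (hH : ∀ i < N, m.h i ≤ H) : 0 ≤ H :=
  (m.h_pos m.pos).le.trans (hH 0 m.pos)

lemma x_le_x {i j : ℕ} (hij : i ≤ j) (hj : j ≤ N) : m.x i ≤ m.x j := by
  induction j, hij using Nat.le_induction with
  | base => exact le_rfl
  | succ k _ ih => exact (ih (Nat.le_of_succ_le hj)).trans (m.x_mono k hj).le

lemma x_mem_Icc {i : ℕ} (hi : i ≤ N) : m.x i ∈ Icc (0 : ℝ) 1 :=
  ⟨m.x_zero ▸ m.x_le_x (Nat.zero_le i) hi, m.x_last ▸ m.x_le_x hi le_rfl⟩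

lemma exists_mem_Ico {t : ℝ} (ht : t ∈ Ico (0 : ℝ) 1) :
    ∃ i < N, t ∈ Ico (m.x i) (m.x (i + 1)) := by
  by_contra! h
  have hle : ∀ i ≤ N, m.x i ≤ t := by
    intro i hi
    induction i with
    | zero => exact m.x_zero.trans_le ht.1
    | succ k ih =>
      by_contra! hlt
      exact h k hi ⟨ih (Nat.le_of_succ_le hi), hlt⟩
  exact (hle N le_rfl).not_gt (m.x_last ▸ ht.2)

lemma ae_exists_mem_Ioo :
    ∀ᵐ t ∂(volume.restrict (Ioo (0 : ℝ) 1)), ∃ i < N, t ∈ Ioo (m.x i) (m.x (i + 1)) := by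
  have hnodes : ∀ᵐ t, t ∉ range m.x :=
    measure_eq_zero_iff_ae_notMem.1 ((countable_range m.x).measure_zero _)
  filter_upwards [ae_restrict_mem measurableSet_Ioo, ae_restrict_of_ae hnodes] with t ht htnode
  obtain ⟨i, hi, hti⟩ := m.exists_mem_Ico (Ioo_subset_Ico_self ht)
  exact ⟨i, hi, lt_of_le_of_ne hti.1 fun heq => htnode ⟨i, heq⟩, hti.2⟩

lemma sum_integral_elements {g : ℝ → ℝ} (hg : IntervalIntegrable g volume 0 1) :
    ∑ i ∈ Finset.range N, ∫ t in m.x i..m.x (i + 1), g t = ∫ t in (0 : ℝ)..1, g t := by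
  rw [intervalIntegral.sum_integral_adjacent_intervals fun i hi =>
    intervalIntegrable_mono hg (m.x_mem_Icc hi.le) (m.x_mem_Icc hi), m.x_zero, m.x_last]

lemma memLp_element {g : ℝ → ℝ} (hg : MemLp g 2 (volume.restrict (Ioo 0 1))) {i : ℕ}
    (hi : i < N) : MemLp g 2 (volume.restrict (Ioo (m.x i) (m.x (i + 1)))) :=
  hg.mono_measure (Measure.restrict_mono
    (Ioo_subset_Ioo (m.x_mem_Icc hi.le).1 (m.x_mem_Icc hi).2) le_rfl)

lemma isPrimitiveOn_element {g g' : ℝ → ℝ} (h : IsPrimitiveOn g g' 0 1) {i : ℕ} (hi : i < N) :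
    IsPrimitiveOn g g' (m.x i) (m.x (i + 1)) :=
  h.mono (m.x_mem_Icc hi.le).1 (m.x_mono i hi).le (m.x_mem_Icc hi).2

lemma sqrt_integral_sq_element_le_L2 {g : ℝ → ℝ} (hg : MemLp g 2 (volume.restrict (Ioo 0 1)))
    {i : ℕ} (hi : i < N) : √(∫ t in m.x i..m.x (i + 1), g t ^ 2) ≤ L2 g :=
  sqrt_integral_sq_le_L2 hg (m.x_mem_Icc hi.le).1 (m.x_mono i hi).le (m.x_mem_Icc hi).2

/-- The step function with value `s i` on the element `[x i, x (i + 1))`. -/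
def stepFun (s : ℕ → ℝ) (t : ℝ) : ℝ :=
  ∑ i ∈ Finset.range N, (Ico (m.x i) (m.x (i + 1))).indicator (fun _ => s i) t

lemma stepFun_of_mem_Ico (s : ℕ → ℝ) {i : ℕ} (hi : i < N) {t : ℝ}
    (ht : t ∈ Ico (m.x i) (m.x (i + 1))) : m.stepFun s t = s i := by
  rw [stepFun, Finset.sum_eq_single_of_mem i (Finset.mem_range.2 hi), indicator_of_mem ht]
  intro j hj hji
  refine indicator_of_notMem (fun hjt => ?_) _
  rcases lt_or_gt_of_ne hji with hlt | hgt
  · exact (hjt.2.trans_le ((m.x_le_x hlt hi.le).trans ht.1)).false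
  · exact (ht.2.trans_le ((m.x_le_x hgt (Finset.mem_range.1 hj).le).trans hjt.1)).false

lemma measurable_stepFun (s : ℕ → ℝ) : Measurable (m.stepFun s) :=
  Finset.measurable_sum _ fun _ _ => measurable_const.indicator measurableSet_Ico

lemma memLp_stepFun (s : ℕ → ℝ) : MemLp (m.stepFun s) 2 (volume.restrict (Ioo 0 1)) :=
  memLp_finsetSum _ fun _ _ => (memLp_const _).indicator measurableSet_Ico

lemma integral_comp_stepFun (F : ℝ → ℝ → ℝ) (s : ℕ → ℝ) {i : ℕ} (hi : i < N) :
    ∫ t in m.x i..m.x (i + 1), F t (m.stepFun s t) = ∫ t in m.x i..m.x (i + 1), F t (s i) := by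
  simp only [intervalIntegral.integral_of_le (m.x_mono i hi).le, integral_Ioc_eq_integral_Ioo]
  refine setIntegral_congr_fun measurableSet_Ioo fun t ht => ?_
  simp only [m.stepFun_of_mem_Ico s hi (Ioo_subset_Ico_self ht)]

/-- The continuous piecewise linear function vanishing at `0` whose slope on each element is the
mean of `u'` there; it is the nodal interpolant of `u` when `u` vanishes at `0`. -/
def interpolant (u : H1) : H1 where
  val x := ∫ t in (0 : ℝ)..x, m.stepFun (fun i => ⨍ τ in m.x i..m.x (i + 1), u.dval τ) t
  dval := m.stepFun fun i => ⨍ τ in m.x i..m.x (i + 1), u.dval τ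
  dval_meas := m.measurable_stepFun _
  dval_int := intervalIntegrable_of_memLp_two zero_le_one (m.memLp_stepFun _)
  dval_sq_int := intervalIntegrable_sq_of_memLp_two zero_le_one (m.memLp_stepFun _)
  ftc x _ := by simp

variable {u : H1}

lemma interpolant_val_zero (u : H1) : (m.interpolant u).val 0 = 0 :=
  intervalIntegral.integral_same

lemma interpolant_val_one (h0 : u.val 0 = 0) (h1 : u.val 1 = 0) :
    (m.interpolant u).val 1 = 0 := by
  have hmean : ∀ i < N, ∫ t in m.x i..m.x (i + 1), (m.interpolant u).dval t
      = ∫ t in m.x i..m.x (i + 1), u.dval t := by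
    intro i hi
    have hne : m.x (i + 1) - m.x i ≠ 0 := (m.h_pos hi).ne'
    refine (m.integral_comp_stepFun (fun _ y => y) _ hi).trans ?_
    rw [intervalIntegral.integral_const, interval_average_eq, smul_inv_smul₀ hne]
  calc (m.interpolant u).val 1
      = ∫ t in (0 : ℝ)..1, (m.interpolant u).dval t := rfl
    _ = ∫ t in (0 : ℝ)..1, u.dval t := by
        rw [← m.sum_integral_elements (m.interpolant u).dval_int,
          ← m.sum_integral_elements u.dval_int]
        exact Finset.sum_congr rfl fun i hi => hmean i (Finset.mem_range.1 hi)
    _ = 0 := by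
        rw [u.isPrimitiveOn.integral_eq_sub 0 (left_mem_Icc.2 zero_le_one) 1
          (right_mem_Icc.2 zero_le_one), h0, h1, sub_zero]

lemma isPL_interpolant (u : H1) : m.IsPL (m.interpolant u) := fun _ hi =>
  ⟨_, fun _ ht => m.stepFun_of_mem_Ico _ hi (Ioo_subset_Ico_self ht)⟩

lemma IsPL.sub {m : Mesh N} {v w : H1} (hv : m.IsPL v) (hw : m.IsPL w) : m.IsPL (v - w) := by
  intro i hi
  obtain ⟨s, hs⟩ := hv i hi
  obtain ⟨r, hr⟩ := hw i hi
  exact ⟨s - r, fun t ht => by rw [H1.sub_dval, hs t ht, hr t ht]⟩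

lemma L2_dval_sub_interpolant_le {u'' : ℝ → ℝ} (hu'' : IsPrimitiveOn u.dval u'' 0 1)
    (hL2 : MemLp u'' 2 (volume.restrict (Ioo 0 1))) {H : ℝ} (hH : ∀ i < N, m.h i ≤ H) :
    L2 (u - m.interpolant u).dval ≤ H * L2 u'' := by
  have hH0 := m.nonneg_of_forall_h_le hH
  refine (sq_le_sq₀ (L2_nonneg _) (mul_nonneg hH0 (L2_nonneg _))).1 ?_
  rw [mul_pow, L2_sq, L2_sq, ← m.sum_integral_elements (H1.dval_sq_int _),
    ← m.sum_integral_elements (intervalIntegrable_sq_of_memLp_two zero_le_one hL2),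
    Finset.mul_sum]
  refine Finset.sum_le_sum fun i hi => ?_
  have hi := Finset.mem_range.1 hi
  calc ∫ t in m.x i..m.x (i + 1), (u - m.interpolant u).dval t ^ 2
      = ∫ t in m.x i..m.x (i + 1), (u.dval t - ⨍ τ in m.x i..m.x (i + 1), u.dval τ) ^ 2 :=
        m.integral_comp_stepFun (fun t y => (u.dval t - y) ^ 2) _ hi
    _ ≤ m.h i ^ 2 * ∫ t in m.x i..m.x (i + 1), u'' t ^ 2 :=
        (m.isPrimitiveOn_element hu'' hi).integral_sq_sub_intervalAverage_le
          (m.memLp_element hL2 hi) (m.x_mono i hi)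
    _ ≤ H ^ 2 * ∫ t in m.x i..m.x (i + 1), u'' t ^ 2 :=
        mul_le_mul_of_nonneg_right (pow_le_pow_left₀ (m.h_pos hi).le (hH i hi) 2)
          (intervalIntegral.integral_nonneg (m.x_mono i hi).le fun _ _ => sq_nonneg _)

lemma abs_dval_sub_le_of_isPL {u'' : ℝ → ℝ} (hu'' : IsPrimitiveOn u.dval u'' 0 1)
    (hL2 : MemLp u'' 2 (volume.restrict (Ioo 0 1))) {v : H1} (hv : m.IsPL v) {i : ℕ} (hi : i < N)
    {t : ℝ} (ht : t ∈ Ioo (m.x i) (m.x (i + 1))) :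
    |(u - v).dval t| ≤ (L2 (u - v).dval + m.h i * L2 u'') / √(m.h i) := by
  obtain ⟨y, hy, hey⟩ := exists_mem_Ioo_abs_le_sqrt_integral_sq_div (m.x_mono i hi)
    (intervalIntegrable_mono (u - v).dval_sq_int (m.x_mem_Icc hi.le) (m.x_mem_Icc hi))
  have hmean : |(u - v).dval y| ≤ L2 (u - v).dval / √(m.h i) :=
    hey.trans (div_le_div_of_nonneg_right
      (m.sqrt_integral_sq_element_le_L2 (u - v).memLp_dval hi) (Real.sqrt_nonneg _))
  have hosc : |(u - v).dval t - (u - v).dval y| ≤ √(m.h i) * L2 u'' := by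
    obtain ⟨s, hs⟩ := hv i hi
    rw [H1.sub_dval, H1.sub_dval, hs t ht, hs y hy, sub_sub_sub_cancel_right]
    exact ((m.isPrimitiveOn_element hu'' hi).abs_sub_le (m.memLp_element hL2 hi)
      (Ioo_subset_Icc_self hy) (Ioo_subset_Icc_self ht)).trans
      (mul_le_mul_of_nonneg_left (m.sqrt_integral_sq_element_le_L2 hL2 hi) (Real.sqrt_nonneg _))
  calc |(u - v).dval t| ≤ |(u - v).dval y| + |(u - v).dval t - (u - v).dval y| := by
        simpa using abs_add_le ((u - v).dval y) ((u - v).dval t - (u - v).dval y)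
    _ ≤ L2 (u - v).dval / √(m.h i) + √(m.h i) * L2 u'' := add_le_add hmean hosc
    _ = (L2 (u - v).dval + m.h i * L2 u'') / √(m.h i) := by
        rw [add_div, mul_div_right_comm, Real.div_sqrt]

end Mesh

/-! ### Error estimates -/

section Error

variable {P : Coeffs} {f u'' : ℝ → ℝ} {u uh : H1} {N : ℕ} {m : Mesh N}

lemma Coeffs.IsFESolution.a0_mul_L2_dval_sub_le (huh : P.IsFESolution f m uh)
    (hu : P.IsWeakSolution f u) {v : H1} (hv0 : v.val 0 = 0) (hv1 : v.val 1 = 0)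
    (hv : m.IsPL v) : P.a0 * L2 (u - uh).dval ≤ P.contConst * L2 (u - v).dval := by
  obtain ⟨hu0, hu1, hweak⟩ := hu
  obtain ⟨huh0, huh1, huhPL, hgalerkin⟩ := huh
  have he0 : (u - uh).val 0 = 0 := by rw [H1.sub_val, hu0, huh0, sub_zero]
  have he1 : (u - uh).val 1 = 0 := by rw [H1.sub_val, hu1, huh1, sub_zero]
  have horth : P.B (u - uh) (v - uh) = 0 := by
    have hw0 : (v - uh).val 0 = 0 := by rw [H1.sub_val, hv0, huh0, sub_zero]
    have hw1 : (v - uh).val 1 = 0 := by rw [H1.sub_val, hv1, huh1, sub_zero]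
    rw [P.B_sub_left, hweak _ hw0 hw1, hgalerkin _ hw0 hw1 (hv.sub huhPL), sub_self]
  have hswap : P.B (u - uh) (u - uh) = P.B (u - uh) (u - v) := by
    rw [P.B_sub_right] at horth
    rw [P.B_sub_right _ u uh, P.B_sub_right _ u v]
    linarith
  have hsq : P.a0 * L2 (u - uh).dval * L2 (u - uh).dval
      ≤ P.contConst * L2 (u - v).dval * L2 (u - uh).dval :=
    calc P.a0 * L2 (u - uh).dval * L2 (u - uh).dval = P.a0 * L2 (u - uh).dval ^ 2 := by ring
      _ ≤ P.B (u - uh) (u - uh) := P.a0_mul_L2_dval_sq_le_B _ he0 he1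
      _ = P.B (u - uh) (u - v) := hswap
      _ ≤ P.contConst * L2 (u - uh).dval * L2 (u - v).dval :=
          P.B_le_contConst_mul he0 (by rw [H1.sub_val, hu0, hv0, sub_zero])
      _ = P.contConst * L2 (u - v).dval * L2 (u - uh).dval := by ring
  rcases (L2_nonneg (u - uh).dval).eq_or_lt with hzero | hpos
  · rw [← hzero, mul_zero]
    exact mul_nonneg P.contConst_nonneg (L2_nonneg _)
  · exact le_of_mul_le_mul_right hsq hpos

lemma Coeffs.IsFESolution.L2_dval_sub_le (huh : P.IsFESolution f m uh)
    (hu : P.IsWeakSolution f u) (hf : MemL2 f) (hu2 : u.IsH2) {H : ℝ} (hH : ∀ i < N, m.h i ≤ H) :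
    L2 (u - uh).dval ≤ P.contConst / P.a0 ^ 2 * H * L2 (P.res f u) := by
  obtain ⟨u'', hu'', hL2⟩ := hu2.exists_isPrimitiveOn
  have ha0 := P.a0_pos
  have hH0 := m.nonneg_of_forall_h_le hH
  have hκ := P.contConst_nonneg
  have hreg : L2 u'' ≤ L2 (P.res f u) / P.a0 :=
    (le_div_iff₀' ha0).2 (hu.a0_mul_L2_le_L2_res hf hu'')
  refine le_of_mul_le_mul_left ?_ ha0
  calc P.a0 * L2 (u - uh).dval
      ≤ P.contConst * L2 (u - m.interpolant u).dval :=
        huh.a0_mul_L2_dval_sub_le hu (m.interpolant_val_zero u)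
          (m.interpolant_val_one hu.1 hu.2.1) (m.isPL_interpolant u)
    _ ≤ P.contConst * (H * (L2 (P.res f u) / P.a0)) := by
        gcongr
        exact (m.L2_dval_sub_interpolant_le hu'' hL2 hH).trans (by gcongr)
    _ = P.a0 * (P.contConst / P.a0 ^ 2 * H * L2 (P.res f u)) := by field_simp

lemma Coeffs.IsFESolution.Linf_val_sub_le (huh : P.IsFESolution f m uh)
    (hu : P.IsWeakSolution f u) (hf : MemL2 f) (hu2 : u.IsH2) {H : ℝ} (hH : ∀ i < N, m.h i ≤ H) :
    Linf (u - uh).val ≤ P.contConst / P.a0 ^ 2 * H * L2 (P.res f u) :=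
  ((u - uh).Linf_val_le_L2_dval (by rw [H1.sub_val, hu.1, huh.1, sub_zero])).trans
    (huh.L2_dval_sub_le hu hf hu2 hH)

lemma Coeffs.IsFESolution.Linf_dval_sub_le (huh : P.IsFESolution f m uh)
    (hu : P.IsWeakSolution f u) (hf : MemL2 f) (hu2 : u.IsH2) {H δ : ℝ}
    (hH : ∀ i < N, m.h i ≤ H) (hδ0 : 0 < δ) (hδ : ∀ i < N, δ ≤ m.h i) :
    Linf (u - uh).dval ≤ (P.contConst / P.a0 ^ 2 + 1 / P.a0) * (H / √δ) * L2 (P.res f u) := by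
  obtain ⟨u'', hu'', hL2⟩ := hu2.exists_isPrimitiveOn
  have hH0 := m.nonneg_of_forall_h_le hH
  have hreg : L2 u'' ≤ L2 (P.res f u) / P.a0 :=
    (le_div_iff₀' P.a0_pos).2 (hu.a0_mul_L2_le_L2_res hf hu'')
  refine Linf_le_of_ae_abs_le ?_
  filter_upwards [m.ae_exists_mem_Ioo] with t ⟨i, hi, ht⟩
  have hD := L2_nonneg (u - uh).dval
  have hS := L2_nonneg u''
  calc |(u - uh).dval t| ≤ (L2 (u - uh).dval + m.h i * L2 u'') / √(m.h i) :=
        m.abs_dval_sub_le_of_isPL hu'' hL2 huh.2.2.1 hi ht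
    _ ≤ (L2 (u - uh).dval + H * L2 u'') / √δ := by
        gcongr
        exacts [hH i hi, hδ i hi]
    _ ≤ (P.contConst / P.a0 ^ 2 * H * L2 (P.res f u) + H * (L2 (P.res f u) / P.a0)) / √δ := by
        gcongr
        exact huh.L2_dval_sub_le hu hf hu2 hH
    _ = (P.contConst / P.a0 ^ 2 + 1 / P.a0) * (H / √δ) * L2 (P.res f u) := by ring

end Error

end

lemma mul_two_div_div_sqrt_mul_le {C R ρ n : ℝ} (hC : 0 ≤ C) (hR : 0 ≤ R) (hn : 0 < n) :
    C * (2 / n / √(1 / (ρ * n))) * R ≤ √(ρ + 1) * (2 * C) * R / √n := by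
  calc C * (2 / n / √(1 / (ρ * n))) * R = √ρ * (2 * C) * R / √n := by
        rw [one_div, Real.sqrt_inv, div_inv_eq_mul, Real.sqrt_mul' _ hn.le]
        nth_rw 1 [← Real.mul_self_sqrt hn.le]
        field_simp
    _ ≤ √(ρ + 1) * (2 * C) * R / √n := by
        gcongr
        linarith

theorem statement15_general (P : Coeffs) :
    ∃ C : ℝ, 0 < C ∧
      ∀ f : ℝ → ℝ, MemL2 f →
      ∀ u : H1, P.IsWeakSolution f u → u.IsH2 →
      ∀ (N : ℕ) (m : Mesh N) (H : ℝ), (∀ i < N, m.h i ≤ H) →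
      ∀ uh : H1, P.IsFESolution f m uh →
        Linf (fun t => u.val t - uh.val t) ≤ C * H * L2 (P.res f u) ∧
        ∀ δ : ℝ, 0 < δ → (∀ i < N, δ ≤ m.h i) →
          Linf (fun t => u.dval t - uh.dval t) ≤ C * (H / √δ) * L2 (P.res f u) := by
  have ha0 := P.a0_pos
  have hκ := P.contConst_nonneg
  refine ⟨P.contConst / P.a0 ^ 2 + 1 / P.a0, by positivity, ?_⟩
  intro f hf u hu hu2 N m H hH uh huh
  refine ⟨(huh.Linf_val_sub_le hu hf hu2 hH).trans ?_,
    fun δ hδ0 hδ => huh.Linf_dval_sub_le hu hf hu2 hH hδ0 hδ⟩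
  have hH0 := m.nonneg_of_forall_h_le hH
  have hR := L2_nonneg (P.res f u)
  gcongr
  exact le_add_of_nonneg_right (by positivity)

/-- L^∞ error bounds on meshes in S_N, with the constant independent
of ρ₀ (Lemma 5.2). -/
theorem statement15 (P : Coeffs) :
    ∃ C : ℝ, 0 < C ∧
      ∀ f : ℝ → ℝ, MemL2 f →
      ∀ u : H1, P.IsWeakSolution f u → u.IsH2 →
      ∀ ρ0 : ℝ, 1 ≤ ρ0 →
      ∀ (N : ℕ), 0 < N →
      ∀ (m : Mesh N), m.InS ρ0 →
      ∀ uh : H1, P.IsFESolution f m uh →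
        Linf (fun t => u.val t - uh.val t) ≤ C * L2 (P.res f u) / (N:ℝ) ∧
        Linf (fun t => u.dval t - uh.dval t)
          ≤ Real.sqrt (ρ0 + 1) * C * L2 (P.res f u) / Real.sqrt (N:ℝ) := by
  obtain ⟨C, hC, hbound⟩ := statement15_general P
  refine ⟨2 * C, by positivity, fun f hf u hu hu2 ρ0 hρ0 N hN m hm uh huh => ?_⟩
  obtain ⟨hval, hdval⟩ := hbound f hf u hu hu2 N m (2 / N) (fun i hi => (hm i hi).2) uh huh
  exact ⟨hval.trans_eq (by ring), (hdval _ (by positivity) fun i hi => (hm i hi).1).trans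
    (mul_two_div_div_sqrt_mul_le hC.le (L2_nonneg _) (Nat.cast_pos.2 hN))⟩

end EquidMesh
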